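/- Let m > 1 be an integer and let q be a real number with 0 < q < 1. Then ((q; q)_∞)^{2^{m-1}} / (q^{1/2^m}; q^{1/2^{m-1}})_∞ = ψ(q^{1/2^m}) · ∏_{k=1}^{m-1} (ψ(q^{1/2^k}))^{2^{m-1-k}}. -/

import Mathlib

/-- Infinite q-Pochhammer symbol `(a; q)_∞ = ∏_{i=0}^∞ (1 - a qⁱ)` (real version). -/
noncomputable def qPochR (a q : ℝ) : ℝ := ∏' i : ℕ, (1 - a * q ^ i)

/-- Ramanujan's theta function `ψ(q) = (q²;q²)_∞ / (q;q²)_∞`. -/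
noncomputable def psiR (q : ℝ) : ℝ := qPochR (q ^ 2) (q ^ 2) / qPochR q (q ^ 2)

/-!
Write `E(x) = (x; x)_∞`. Splitting the factors of `E(x)` by the parity of the exponent gives
`E(x) = (x; x²)_∞ E(x²)`, so that `ψ(x) = E(x²)² / E(x)`. Along a chain of successive square
roots `r₀, r₁, r₂, …` of `q` this reads `ψ(rₖ) = E(rₖ₋₁)² / E(rₖ)`, and the product of the
`ψ(rₖ)` with exponents `2 ^ (n - k)` telescopes to `E(q) ^ 2 ^ n / E(rₙ)`. The last square root
enters through the definition `ψ(rₙ₊₁) = E(rₙ) / (rₙ₊₁; rₙ)_∞`, whose numerator cancels `E(rₙ)`.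
-/

/-- The infinite q-Pochhammer symbol `(a; q)_∞` in a topological ring. Like `∏'`, it is only
meaningful when the product converges, for instance when `‖q‖ < 1` in a complete normed ring. -/
noncomputable def qPochhammer {R : Type*} [CommRing R] [TopologicalSpace R] (a q : R) : R :=
  ∏' i : ℕ, (1 - a * q ^ i)

/-- Ramanujan's theta function `ψ(q) = (q²; q²)_∞ / (q; q²)_∞` over a topological field. -/
noncomputable def ramanujanPsi {K : Type*} [Field K] [TopologicalSpace K] (q : K) : K :=
  qPochhammer (q ^ 2) (q ^ 2) / qPochhammer q (q ^ 2)

section NormedCommRing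

variable {R : Type*} [NormedCommRing R]

theorem summable_norm_neg_mul_pow (a : R) {q : R} (hq : ‖q‖ < 1) :
    Summable fun i : ℕ ↦ ‖-(a * q ^ i)‖ := by
  simp only [norm_neg]
  exact .of_nonneg_of_le (fun _ ↦ norm_nonneg _) (fun _ ↦ norm_mul_le _ _)
    ((summable_norm_geometric_of_norm_lt_one hq).mul_left ‖a‖)

variable [NormOneClass R] [CompleteSpace R]

theorem multipliable_one_sub_mul_pow (a : R) {q : R} (hq : ‖q‖ < 1) :
    Multipliable fun i : ℕ ↦ 1 - a * q ^ i := by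
  simpa only [sub_eq_add_neg] using
    multipliable_one_add_of_summable (summable_norm_neg_mul_pow a hq)

theorem qPochhammer_eq_mul_qPochhammer_sq (a : R) {q : R} (hq : ‖q‖ < 1) :
    qPochhammer a q = qPochhammer a (q ^ 2) * qPochhammer (a * q) (q ^ 2) := by
  have hq2 : ‖q ^ 2‖ < 1 :=
    (norm_pow_le q 2).trans_lt (pow_lt_one₀ (norm_nonneg q) hq two_ne_zero)
  have even_factor (k : ℕ) : 1 - a * q ^ (2 * k) = 1 - a * (q ^ 2) ^ k := by rw [pow_mul]
  have odd_factor (k : ℕ) : 1 - a * q ^ (2 * k + 1) = 1 - a * q * (q ^ 2) ^ k := by ring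
  have even_mul_odd := tprod_even_mul_odd (f := fun i : ℕ ↦ 1 - a * q ^ i)
    (by simpa only [even_factor] using multipliable_one_sub_mul_pow a hq2)
    (by simpa only [odd_factor] using multipliable_one_sub_mul_pow (a * q) hq2)
  simpa only [qPochhammer, even_factor, odd_factor] using even_mul_odd.symm

variable [NormMulClass R]

theorem qPochhammer_ne_zero {a q : R} (hq : ‖q‖ < 1) (ha : ∀ i : ℕ, a * q ^ i ≠ 1) :
    qPochhammer a q ≠ 0 := by
  have factor_ne_zero (i : ℕ) : 1 + -(a * q ^ i) ≠ 0 := by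
    simpa only [← sub_eq_add_neg] using sub_ne_zero.2 (ha i).symm
  simpa only [qPochhammer, sub_eq_add_neg] using
    tprod_one_add_ne_zero_of_summable factor_ne_zero (summable_norm_neg_mul_pow a hq)

theorem qPochhammer_ne_zero_of_norm_lt_one {a q : R} (ha : ‖a‖ < 1) (hq : ‖q‖ < 1) :
    qPochhammer a q ≠ 0 := by
  refine qPochhammer_ne_zero hq fun i h ↦ ?_
  have norm_lt_one : ‖a * q ^ i‖ < 1 := by
    rw [norm_mul, norm_pow]
    exact mul_lt_one_of_nonneg_of_lt_one_left (norm_nonneg a) ha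
      (pow_le_one₀ (norm_nonneg q) hq.le)
  exact norm_lt_one.ne (by rw [h, norm_one])

end NormedCommRing

theorem norm_lt_one_of_succ_sq_eq {R : Type*} [NormedRing R] [NormMulClass R] [NormOneClass R]
    {r : ℕ → R} {n : ℕ} (h0 : ‖r 0‖ < 1) (hr : ∀ k < n, r (k + 1) ^ 2 = r k) : ‖r n‖ < 1 := by
  induction n with
  | zero => exact h0
  | succ n ih =>
    rw [← sq_lt_one_iff₀ (norm_nonneg _), ← norm_pow, hr n n.lt_succ_self]
    exact ih fun k hk ↦ hr k (hk.trans n.lt_succ_self)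

section NormedField

variable {K : Type*} [NormedField K] [CompleteSpace K]

theorem ramanujanPsi_eq_sq_div {x : K} (hx : ‖x‖ < 1) :
    ramanujanPsi x = qPochhammer (x ^ 2) (x ^ 2) ^ 2 / qPochhammer x x := by
  have hx2 : ‖x ^ 2‖ < 1 := by rwa [norm_pow, sq_lt_one_iff₀ (norm_nonneg x)]
  rw [ramanujanPsi, qPochhammer_eq_mul_qPochhammer_sq x hx, ← sq x, sq (qPochhammer _ _),
    mul_div_mul_right _ _ (qPochhammer_ne_zero_of_norm_lt_one hx2 hx2)]

theorem prod_ramanujanPsi_pow_eq_div {r : ℕ → K} {n : ℕ} (h0 : ‖r 0‖ < 1)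
    (hr : ∀ k < n, r (k + 1) ^ 2 = r k) :
    ∏ k ∈ Finset.Icc 1 n, ramanujanPsi (r k) ^ 2 ^ (n - k) =
      qPochhammer (r 0) (r 0) ^ 2 ^ n / qPochhammer (r n) (r n) := by
  induction n with
  | zero => simp [qPochhammer_ne_zero_of_norm_lt_one h0 h0]
  | succ n ih =>
    have hr' : ∀ k < n, r (k + 1) ^ 2 = r k := fun k hk ↦ hr k (hk.trans n.lt_succ_self)
    have hn : ‖r n‖ < 1 := norm_lt_one_of_succ_sq_eq h0 hr'
    have prod_eq_sq : ∏ k ∈ Finset.Icc 1 n, ramanujanPsi (r k) ^ 2 ^ (n + 1 - k) =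
        (∏ k ∈ Finset.Icc 1 n, ramanujanPsi (r k) ^ 2 ^ (n - k)) ^ 2 := by
      rw [← Finset.prod_pow]
      refine Finset.prod_congr rfl fun k hk ↦ ?_
      rw [← pow_mul, ← pow_succ, Nat.succ_sub (Finset.mem_Icc.1 hk).2]
    have last_factor : ramanujanPsi (r (n + 1)) =
        qPochhammer (r n) (r n) ^ 2 / qPochhammer (r (n + 1)) (r (n + 1)) := by
      rw [ramanujanPsi_eq_sq_div (norm_lt_one_of_succ_sq_eq h0 hr), hr n n.lt_succ_self]
    rw [Finset.prod_Icc_succ_top (Nat.le_add_left 1 n), prod_eq_sq, ih hr', Nat.sub_self,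
      pow_zero, pow_one, last_factor, div_pow, ← pow_mul, ← pow_succ,
      div_mul_div_cancel₀ (pow_ne_zero 2 (qPochhammer_ne_zero_of_norm_lt_one hn hn))]

theorem poch_psi_product_general {r : ℕ → K} {m : ℕ} (hm : m ≠ 0) (h0 : ‖r 0‖ < 1)
    (hr : ∀ k < m, r (k + 1) ^ 2 = r k) :
    qPochhammer (r 0) (r 0) ^ 2 ^ (m - 1) / qPochhammer (r m) (r (m - 1)) =
      ramanujanPsi (r m) *
        ∏ k ∈ Finset.Icc 1 (m - 1), ramanujanPsi (r k) ^ 2 ^ (m - 1 - k) := by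
  obtain ⟨n, rfl⟩ := Nat.exists_eq_succ_of_ne_zero hm
  have hr' : ∀ k < n, r (k + 1) ^ 2 = r k := fun k hk ↦ hr k (hk.trans n.lt_succ_self)
  have hn : ‖r n‖ < 1 := norm_lt_one_of_succ_sq_eq h0 hr'
  rw [Nat.succ_sub_one, prod_ramanujanPsi_pow_eq_div h0 hr', ramanujanPsi, hr n n.lt_succ_self,
    mul_comm, div_mul_div_cancel₀ (qPochhammer_ne_zero_of_norm_lt_one hn hn)]

end NormedField

theorem sq_rpow_one_div_two_pow_succ {q : ℝ} (hq : 0 ≤ q) (k : ℕ) :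
    (q ^ ((1 : ℝ) / 2 ^ (k + 1))) ^ 2 = q ^ ((1 : ℝ) / 2 ^ k) := by
  rw [← Real.rpow_mul_natCast hq, Nat.cast_two, pow_succ, ← div_div,
    div_mul_cancel₀ _ two_ne_zero]

theorem poch_psi_product (m : ℕ) (hm : 1 < m) (q : ℝ) (hq0 : 0 < q) (hq1 : q < 1) :
    (qPochR q q) ^ (2 ^ (m - 1)) /
        qPochR (q ^ ((1 : ℝ) / 2 ^ m)) (q ^ ((1 : ℝ) / 2 ^ (m - 1))) =
      psiR (q ^ ((1 : ℝ) / 2 ^ m)) *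
        ∏ k ∈ Finset.Icc 1 (m - 1), (psiR (q ^ ((1 : ℝ) / 2 ^ k))) ^ (2 ^ (m - 1 - k)) := by
  have hr0 : q ^ ((1 : ℝ) / 2 ^ 0) = q := by rw [pow_zero, div_one, Real.rpow_one]
  have h0 : ‖q ^ ((1 : ℝ) / 2 ^ 0)‖ < 1 := by rwa [hr0, Real.norm_of_nonneg hq0.le]
  have key := poch_psi_product_general (r := fun k ↦ q ^ ((1 : ℝ) / 2 ^ k)) (m := m)
    (by omega) h0 fun k _ ↦ sq_rpow_one_div_two_pow_succ hq0.le k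
  rw [hr0] at key
  -- `qPochR` and `psiR` unfold to the real instances of `qPochhammer` and `ramanujanPsi`.
  exact key
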